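/- Extended generalized Faulhaber formula with shift parameter: Let m ∈ ℂ with m ≠ −1, let x ∈ ℝ with x > 0, and let a ∈ ℕ₀. Then the series ∑_{k=1}^{∞} (−1)^{k+a} (∑_{l=1}^{k} C(m+1, l+a) S_k^{(1)}(l) B_{l+a}({x})) / ((x+1)(x+2)⋯(x+k)) converges absolutely, and ∑_{k=1}^{⌊x⌋} k^m = x^{m+1}/(m+1) + ζ(−m) + (1/(m+1)) ∑_{k=1}^{a} (−1)^k C(m+1, k) B_k({x}) x^{m−k+1} + (x^{m−a+1}/(m+1)) ∑_{k=1}^{∞} (−1)^{k+a} (∑_{l=1}^{k} C(m+1, l+a) S_k^{(1)}(l) B_{l+a}({x})) / ((x+1)(x+2)⋯(x+k)). -/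

import Mathlib

open Finset in
/-- Unsigned Stirling numbers of the first kind, via the rising-factorial recurrence:
`z(z+1)⋯(z+k−1) = ∑ l, stirling1Unsigned k l * z^l`. -/
def stirling1Unsigned : ℕ → ℕ → ℕ
  | 0, 0 => 1
  | 0, _ + 1 => 0
  | k + 1, 0 => k * stirling1Unsigned k 0
  | k + 1, l + 1 => stirling1Unsigned k l + k * stirling1Unsigned k (l + 1)

/-- The Stirling numbers of the first kind `S_k^{(1)}(l)` of the paper, defined by
`z(z+1)⋯(z+k−1) = (−1)^k ∑_{l=0}^k (−1)^l S_k^{(1)}(l) z^l`, i.e.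
`S_k^{(1)}(l) = (−1)^{k−l}` times the coefficient of `z^l` in the rising factorial. -/
def S1 (k l : ℕ) : ℤ := (-1) ^ (k + l) * stirling1Unsigned k l

/-- The `n`-th Bernoulli polynomial `B_n(x) = ∑_{k=0}^n C(n,k) B_k x^{n−k}`,
with `B_1 = −1/2`. -/
noncomputable def bernPoly (n : ℕ) (x : ℝ) : ℝ :=
  ∑ k ∈ Finset.range (n + 1), (n.choose k : ℝ) * (bernoulli k : ℝ) * x ^ (n - k)

/-- The generalized binomial coefficient `C(w,k) = w(w−1)⋯(w−k+1)/k!`. -/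
noncomputable def cchoose (w : ℂ) (k : ℕ) : ℂ :=
  (∏ i ∈ Finset.range k, (w - i)) / (k.factorial : ℂ)

/-- The rising product `(z+1)(z+2)⋯(z+k)`. -/
noncomputable def risingProd (z : ℂ) (k : ℕ) : ℂ :=
  ∏ i ∈ Finset.range k, (z + i + 1)

/-- The rising product `(x+1)(x+2)⋯(x+k)` over the reals. -/
noncomputable def risingProdR (x : ℝ) (k : ℕ) : ℝ :=
  ∏ i ∈ Finset.range k, (x + i + 1)

/-- The digamma function `ψ(z) = Γ′(z)/Γ(z)`. -/
noncomputable def digamma (z : ℂ) : ℂ := deriv Complex.Gamma z / Complex.Gamma z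

/-!
The numerators of an inverse factorial series which re-sums `∑ c_l / x ^ l` are the Stirling
transform of `c`. For `c_l = v ^ l` they are rising factorials of `v`; if `v` is imaginary, the
reflection formula bounds these by `k! ‖v‖ exp (π ‖v‖)`, so the series converges, to `v / (x - v)`.
Integrating over `v = x q / z` against `q ^ (w - 1) exp (-x q)` gives the coefficients
`(w)_l / z ^ l` of an incomplete Gamma integral, and the bound is integrable as soon as `‖z‖ > π`.
The frequencies `z = 2πij` of the Fourier series of the periodic Bernoulli functions qualify, so for
large `a` the series of the theorem converges to a multiple of `∫ B_a({t}) t ^ (m - a) dt` over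
`(x, ∞)`. That integral is the Euler–Maclaurin remainder of `∑ k ≤ x, k ^ m`: for `re m < -1` by
Abel summation and integration by parts, then by analytic continuation in `m`. Shifting the
coefficients of an inverse factorial series by one multiplies it by `x`, up to the first
coefficient, and this brings `a` down to its given value.
-/

section

open Finset Filter Topology MeasureTheory

section StirlingTransform

variable {R : Type*} [CommSemiring R]

theorem stirling1Unsigned_eq_stirlingFirst (k l : ℕ) :
    stirling1Unsigned k l = Nat.stirlingFirst k l := by
  induction k, l using stirling1Unsigned.induct with
  | case1 => rfl
  | case2 => rfl
  | case3 k ih =>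
    rw [stirling1Unsigned, ih]
    cases k <;> simp
  | case4 k l ih₁ ih₂ =>
    rw [stirling1Unsigned, ih₁, ih₂, Nat.stirlingFirst_succ_succ, add_comm]

/-- The sums `∑ l ≤ k, c l * [k, l]` weighting a sequence by unsigned Stirling numbers of the first
kind: the numerators of the inverse factorial series which re-sums `∑ c l / x ^ l`. -/
def stirlingTransform (c : ℕ → R) (k : ℕ) : R :=
  ∑ l ∈ range (k + 1), c l * (Nat.stirlingFirst k l : R)

@[simp]
theorem stirlingTransform_zero (c : ℕ → R) : stirlingTransform c 0 = c 0 := by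
  simp [stirlingTransform]

theorem stirlingTransform_succ (c : ℕ → R) (k : ℕ) :
    stirlingTransform c (k + 1) =
      k * stirlingTransform c k + stirlingTransform (fun l => c (l + 1)) k := by
  have extend : stirlingTransform c k =
      ∑ l ∈ range (k + 2), c l * (Nat.stirlingFirst k l : R) := by
    simp [stirlingTransform, sum_range_succ _ (k + 1), Nat.stirlingFirst_eq_zero_of_lt]
  have bottom : (k : R) * (c 0 * (Nat.stirlingFirst k 0 : R)) = 0 := by
    cases k <;> simp
  rw [extend, sum_range_succ', mul_add, bottom, add_zero, stirlingTransform, sum_range_succ',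
    Nat.stirlingFirst_succ_zero, Nat.cast_zero, mul_zero, add_zero, stirlingTransform, mul_sum,
    ← sum_add_distrib]
  refine sum_congr rfl fun l _ => ?_
  rw [Nat.stirlingFirst_succ_succ]
  push_cast
  ring

theorem stirlingTransform_succ_eq_sum_Icc (c : ℕ → R) (k : ℕ) :
    stirlingTransform c (k + 1) = ∑ l ∈ Icc 1 (k + 1), c l * (Nat.stirlingFirst (k + 1) l : R) := by
  rw [stirlingTransform, sum_range_succ', Nat.stirlingFirst_succ_zero, Nat.cast_zero, mul_zero,
    add_zero, range_eq_Ico, sum_Ico_add' (fun l => c l * (Nat.stirlingFirst (k + 1) l : R)) 0 _ 1]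
  rfl

theorem stirlingTransform_const_mul (r : R) (c : ℕ → R) (k : ℕ) :
    stirlingTransform (fun l => r * c l) k = r * stirlingTransform c k := by
  simp only [stirlingTransform, mul_sum, mul_assoc]

theorem stirlingTransform_pow (v : R) (k : ℕ) :
    stirlingTransform (fun l => v ^ l) k = (ascPochhammer R k).eval v := by
  induction k with
  | zero => simp
  | succ k ih =>
    have shift : stirlingTransform (fun l => v ^ (l + 1)) k = v * (ascPochhammer R k).eval v := by
      simp only [pow_succ', stirlingTransform_const_mul, ih]
    rw [stirlingTransform_succ, ih, shift, ascPochhammer_succ_eval]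
    ring

theorem stirlingTransform_single_one (k : ℕ) :
    stirlingTransform (Pi.single 1 1 : ℕ → R) (k + 1) = (k.factorial : R) := by
  simp [stirlingTransform, Pi.single_apply, Nat.stirlingFirst_one_right]

end StirlingTransform

section InverseFactorialSeries

theorem eq_zero_of_summable_of_tendsto_natCast_mul {u : ℕ → ℝ} {r : ℝ} (hu : Summable u)
    (hr : Tendsto (fun n : ℕ => (n : ℝ) * u n) atTop (𝓝 r)) : r = 0 := by
  by_contra hr₀
  refine Real.not_summable_natCast_inv (summable_of_isBigO_nat hu ?_)
  have inv_mul : (fun n : ℕ => (n : ℝ)⁻¹ * (n * u n)) =ᶠ[atTop] u := by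
    filter_upwards [eventually_ne_atTop 0] with n hn
    rw [inv_mul_cancel_left₀ (Nat.cast_ne_zero.mpr hn)]
  have const_isBigO : (fun _ : ℕ => r) =O[atTop] fun n : ℕ => (n : ℝ) * u n :=
    ((Asymptotics.isEquivalent_const_iff_tendsto hr₀).mpr hr).isBigO_symm
  have inv_isBigO : (fun n : ℕ => (n : ℝ)⁻¹ * r) =O[atTop] u :=
    ((Asymptotics.isBigO_refl _ _).mul const_isBigO).trans_eventuallyEq inv_mul
  simpa [mul_comm _ r, Asymptotics.isBigO_const_mul_left_iff hr₀] using inv_isBigO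

theorem norm_add_natCast_add_one_ge (x : ℂ) (k : ℕ) : x.re + k + 1 ≤ ‖x + k + 1‖ := by
  simpa using Complex.re_le_norm (x + k + 1)

section Recurrence

variable {x : ℂ} {u d : ℕ → ℂ}

theorem natCast_mul_norm_add_re_mul_sum_norm_le
    (h : ∀ k : ℕ, (x + k + 1) * u (k + 1) = k * u k + d k) (n : ℕ) :
    n * ‖u n‖ + x.re * ∑ k ∈ range n, ‖u (k + 1)‖ ≤ ∑ k ∈ range n, ‖d k‖ := by
  induction n with
  | zero => simp
  | succ n ih =>
    have step : (x.re + n + 1) * ‖u (n + 1)‖ ≤ n * ‖u n‖ + ‖d n‖ :=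
      calc (x.re + n + 1) * ‖u (n + 1)‖ ≤ ‖x + n + 1‖ * ‖u (n + 1)‖ := by
            gcongr; exact norm_add_natCast_add_one_ge x n
        _ = ‖n * u n + d n‖ := by rw [← norm_mul, h]
        _ ≤ n * ‖u n‖ + ‖d n‖ := (norm_add_le _ _).trans (by simp)
    rw [sum_range_succ, sum_range_succ]
    push_cast
    linarith

theorem summable_norm_succ_of_recurrence (hx : 0 < x.re)
    (h : ∀ k : ℕ, (x + k + 1) * u (k + 1) = k * u k + d k) (hd : Summable fun k => ‖d k‖) :
    Summable fun k => ‖u (k + 1)‖ := by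
  refine summable_of_sum_range_le (c := (∑' k, ‖d k‖) / x.re) (fun _ => norm_nonneg _) fun n => ?_
  rw [le_div_iff₀' hx]
  calc x.re * ∑ k ∈ range n, ‖u (k + 1)‖
      ≤ n * ‖u n‖ + x.re * ∑ k ∈ range n, ‖u (k + 1)‖ := le_add_of_nonneg_left (by positivity)
    _ ≤ ∑ k ∈ range n, ‖d k‖ := natCast_mul_norm_add_re_mul_sum_norm_le h n
    _ ≤ ∑' k, ‖d k‖ := hd.sum_le_tsum _ fun _ _ => norm_nonneg _

theorem mul_tsum_succ_of_recurrence (hx : 0 < x.re)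
    (h : ∀ k : ℕ, (x + k + 1) * u (k + 1) = k * u k + d k) (hd : Summable fun k => ‖d k‖) :
    x * ∑' k, u (k + 1) = ∑' k, d k := by
  have hu := summable_norm_succ_of_recurrence hx h hd
  have partial_sums (n : ℕ) :
      (n : ℂ) * u n = ∑ k ∈ range n, d k - x * ∑ k ∈ range n, u (k + 1) := by
    induction n with
    | zero => simp
    | succ n ih =>
      rw [sum_range_succ, sum_range_succ]
      push_cast
      linear_combination h n + ih
  have lim : Tendsto (fun n : ℕ => (n : ℂ) * u n) atTop
      (𝓝 (∑' k, d k - x * ∑' k, u (k + 1))) := by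
    simp only [partial_sums]
    exact hd.of_norm.hasSum.tendsto_sum_nat.sub
      (hu.of_norm.hasSum.tendsto_sum_nat.const_mul x)
  have lim_norm := lim.norm
  simp only [norm_mul, Complex.norm_natCast] at lim_norm
  have hu' : Summable fun n => ‖u n‖ := (summable_nat_add_iff 1).mp hu
  have hlim := eq_zero_of_summable_of_tendsto_natCast_mul hu' lim_norm
  exact (sub_eq_zero.mp (norm_eq_zero.mp hlim)).symm

end Recurrence

theorem risingProd_succ (x : ℂ) (k : ℕ) :
    risingProd x (k + 1) = risingProd x k * (x + k + 1) :=
  prod_range_succ _ _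

theorem risingProd_ne_zero {x : ℂ} (hx : 0 < x.re) (k : ℕ) : risingProd x k ≠ 0 :=
  prod_ne_zero_iff.mpr fun i _ => norm_pos_iff.mp <|
    (by positivity : 0 < x.re + i + 1).trans_le (norm_add_natCast_add_one_ge x i)

/-- The `k`-th term of the inverse factorial series which re-sums the formal series
`∑ c l / x ^ l`. -/
noncomputable def inverseFactorialTerm (c : ℕ → ℂ) (x : ℂ) (k : ℕ) : ℂ :=
  stirlingTransform c k / risingProd x k

theorem inverseFactorialTerm_const_mul (r : ℂ) (c : ℕ → ℂ) (x : ℂ) (k : ℕ) :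
    inverseFactorialTerm (fun l => r * c l) x k = r * inverseFactorialTerm c x k := by
  rw [inverseFactorialTerm, stirlingTransform_const_mul, mul_div_assoc, inverseFactorialTerm]

variable {x : ℂ}

theorem inverseFactorialTerm_recurrence (c : ℕ → ℂ) (hx : 0 < x.re) (k : ℕ) :
    (x + k + 1) * inverseFactorialTerm c x (k + 1) =
      k * inverseFactorialTerm c x k + inverseFactorialTerm (fun l => c (l + 1)) x k := by
  have hk := risingProd_ne_zero hx (k + 1)
  rw [risingProd_succ, mul_ne_zero_iff] at hk
  obtain ⟨hprod, hfactor⟩ := hk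
  simp only [inverseFactorialTerm, risingProd_succ, stirlingTransform_succ]
  field_simp

theorem inverseFactorialTerm_zero (c : ℕ → ℂ) (x : ℂ) : inverseFactorialTerm c x 0 = c 0 := by
  simp [inverseFactorialTerm, risingProd]

theorem summable_norm_inverseFactorialTerm_of_shift {c : ℕ → ℂ} (hx : 0 < x.re)
    (hc : Summable fun k => ‖inverseFactorialTerm (fun l => c (l + 1)) x (k + 1)‖) :
    Summable fun k => ‖inverseFactorialTerm c x (k + 1)‖ :=
  summable_norm_succ_of_recurrence hx (inverseFactorialTerm_recurrence c hx)
    ((summable_nat_add_iff 1).mp hc)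

theorem mul_tsum_inverseFactorialTerm {c : ℕ → ℂ} (hx : 0 < x.re)
    (hc : Summable fun k => ‖inverseFactorialTerm (fun l => c (l + 1)) x (k + 1)‖) :
    x * ∑' k, inverseFactorialTerm c x (k + 1) =
      c 1 + ∑' k, inverseFactorialTerm (fun l => c (l + 1)) x (k + 1) := by
  have hc' := (summable_nat_add_iff (f := fun k => ‖inverseFactorialTerm (fun l => c (l + 1)) x k‖)
    1).mp hc
  rw [mul_tsum_succ_of_recurrence hx (inverseFactorialTerm_recurrence c hx) hc',
    hc'.of_norm.tsum_eq_zero_add, inverseFactorialTerm_zero]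

theorem summable_factorial_div_norm_risingProd (hx : 0 < x.re) :
    Summable fun k : ℕ => (k.factorial : ℝ) / ‖risingProd x (k + 1)‖ := by
  have := summable_norm_inverseFactorialTerm_of_shift (c := Pi.single 1 1) hx (by
    simp [inverseFactorialTerm, stirlingTransform, Pi.single_apply])
  simpa [inverseFactorialTerm, stirlingTransform_single_one] using this

end InverseFactorialSeries

section ImaginaryAxis

theorem norm_Gamma_le_Gamma_re {s : ℂ} (hs : 0 < s.re) : ‖Complex.Gamma s‖ ≤ Real.Gamma s.re := by
  rw [Complex.Gamma_eq_integral hs, Complex.GammaIntegral, Real.Gamma_eq_integral hs]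
  refine (norm_integral_le_integral_norm _).trans_eq
    (setIntegral_congr_fun measurableSet_Ioi fun t ht => ?_)
  rw [Set.mem_Ioi] at ht
  simp [Complex.norm_cpow_eq_rpow_re_of_pos ht, Complex.norm_exp]

theorem norm_sin_le_norm_mul_exp (w : ℂ) : ‖Complex.sin w‖ ≤ ‖w‖ * Real.exp ‖w‖ := by
  have exp_sub_one (u : ℂ) : ‖Complex.exp u - 1‖ ≤ ‖u‖ * Real.exp ‖u‖ := by
    simpa using Complex.norm_exp_sub_sum_le_norm_mul_exp u 1
  have hsin : Complex.sin w =
      ((Complex.exp (-w * Complex.I) - 1) - (Complex.exp (w * Complex.I) - 1)) * Complex.I / 2 := by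
    rw [Complex.sin]
    ring
  have hneg := exp_sub_one (-w * Complex.I)
  have hpos := exp_sub_one (w * Complex.I)
  simp only [norm_mul, norm_neg, Complex.norm_I, mul_one] at hneg hpos
  rw [hsin, norm_div, norm_mul, Complex.norm_I, mul_one, Complex.norm_ofNat,
    div_le_iff₀ two_pos]
  linarith [norm_sub_le (Complex.exp (-w * Complex.I) - 1) (Complex.exp (w * Complex.I) - 1)]

variable {v : ℂ}

theorem inv_Gamma_eq_Gamma_one_sub_mul_sin_div (hv : v.re < 1) :
    (Complex.Gamma v)⁻¹ = Complex.Gamma (1 - v) * Complex.sin (Real.pi * v) / Real.pi := by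
  have hreflect := Complex.Gamma_mul_Gamma_one_sub v
  have hGamma : Complex.Gamma (1 - v) ≠ 0 := Complex.Gamma_ne_zero_of_re_pos (by simpa using hv)
  have hpi : (Real.pi : ℂ) ≠ 0 := Complex.ofReal_ne_zero.mpr Real.pi_ne_zero
  rw [← eq_div_iff hGamma] at hreflect
  rw [hreflect, div_div, inv_div, mul_comm (Complex.sin _)]

theorem norm_ascPochhammer_eval_le (hv : v.re = 0) (k : ℕ) :
    ‖(ascPochhammer ℂ (k + 1)).eval v‖ ≤ ‖v‖ * Real.exp (Real.pi * ‖v‖) * k.factorial := by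
  rcases eq_or_ne v 0 with rfl | hv₀
  · simp
  have hpole (n : ℕ) : v ≠ -n := by
    rintro rfl
    simp_all
  have hpi : ‖Complex.sin (Real.pi * v)‖ / Real.pi ≤ ‖v‖ * Real.exp (Real.pi * ‖v‖) := by
    rw [div_le_iff₀ Real.pi_pos]
    refine (norm_sin_le_norm_mul_exp _).trans_eq ?_
    rw [norm_mul, Complex.norm_real, Real.norm_of_nonneg Real.pi_pos.le]
    ring
  have hre : 0 < (v + (k + 1 : ℕ)).re := by
    rw [Complex.add_re, hv, Complex.natCast_re]
    positivity
  have hshift : ‖Complex.Gamma (v + (k + 1 : ℕ))‖ ≤ k.factorial := by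
    refine (norm_Gamma_le_Gamma_re hre).trans_eq ?_
    simp [hv, Real.Gamma_nat_eq_factorial]
  have hreflect : ‖Complex.Gamma (1 - v)‖ ≤ 1 := by
    refine (norm_Gamma_le_Gamma_re (by simp [hv])).trans_eq ?_
    simp [hv]
  calc ‖(ascPochhammer ℂ (k + 1)).eval v‖
      = ‖Complex.Gamma (v + (k + 1 : ℕ))‖ *
          (‖Complex.Gamma (1 - v)‖ * (‖Complex.sin (Real.pi * v)‖ / Real.pi)) := by
        rw [← Complex.Gamma_add_nat_div_Gamma_eq v hpole, div_eq_mul_inv,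
          inv_Gamma_eq_Gamma_one_sub_mul_sin_div (by simp [hv])]
        simp [abs_of_pos Real.pi_pos, mul_div_assoc]
    _ ≤ k.factorial * (1 * (‖v‖ * Real.exp (Real.pi * ‖v‖))) := by gcongr
    _ = ‖v‖ * Real.exp (Real.pi * ‖v‖) * k.factorial := by ring

variable {x : ℂ}

theorem summable_norm_inverseFactorialTerm_of_norm_le {c : ℕ → ℂ} {C : ℝ} (hx : 0 < x.re)
    (hc : ∀ k, ‖stirlingTransform c (k + 1)‖ ≤ C * k.factorial) :
    Summable fun k => ‖inverseFactorialTerm c x (k + 1)‖ := by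
  refine .of_nonneg_of_le (fun _ => norm_nonneg _) (fun k => ?_)
    ((summable_factorial_div_norm_risingProd hx).mul_left C)
  rw [inverseFactorialTerm, norm_div, ← mul_div_assoc]
  gcongr
  exact hc k

theorem hasSum_inverseFactorialTerm_pow (hx : 0 < x.re) (hv : v.re = 0) :
    HasSum (fun k => inverseFactorialTerm (fun l => v ^ l) x (k + 1)) (v / (x - v)) := by
  have hs : Summable fun k => ‖inverseFactorialTerm (fun l => v ^ l) x (k + 1)‖ :=
    summable_norm_inverseFactorialTerm_of_norm_le hx fun k => by
      rw [stirlingTransform_pow]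
      exact norm_ascPochhammer_eval_le hv k
  have hshift (k : ℕ) : inverseFactorialTerm (fun l => v ^ (l + 1)) x k =
      v * inverseFactorialTerm (fun l => v ^ l) x k := by
    simp only [inverseFactorialTerm, pow_succ', stirlingTransform_const_mul, mul_div_assoc]
  have hrec := mul_tsum_inverseFactorialTerm (c := fun l => v ^ l) hx (by
    simpa only [hshift, norm_mul] using hs.mul_left ‖v‖)
  simp only [hshift, tsum_mul_left, pow_one] at hrec
  have hne : x - v ≠ 0 := sub_ne_zero.mpr fun h => by simp [h, hv] at hx
  have hvalue : ∑' k, inverseFactorialTerm (fun l => v ^ l) x (k + 1) = v / (x - v) := by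
    rw [eq_div_iff hne]
    linear_combination hrec
  exact hvalue ▸ hs.of_norm.hasSum

end ImaginaryAxis

section GammaKernel

/-- The integrand `q ^ (w - 1) * exp (-x q)` of Euler's integral for `Γ(w) x ^ (-w)`. -/
noncomputable def gammaKernel (w : ℂ) (x q : ℝ) : ℂ :=
  (q : ℂ) ^ (w - 1) * Complex.exp (-(x * q))

variable {w z : ℂ} {x q : ℝ}

theorem norm_gammaKernel (w : ℂ) (x : ℝ) (hq : 0 < q) :
    ‖gammaKernel w x q‖ = q ^ (w.re - 1) * Real.exp (-(x * q)) := by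
  simp [gammaKernel, Complex.norm_cpow_eq_rpow_re_of_pos hq, Complex.norm_exp]

theorem gammaKernel_mul_pow (w : ℂ) (x : ℝ) (hq : 0 < q) (l : ℕ) :
    gammaKernel w x q * (q : ℂ) ^ l = gammaKernel (w + l) x q := by
  rw [gammaKernel, gammaKernel, add_sub_right_comm,
    Complex.cpow_add _ _ (Complex.ofReal_ne_zero.mpr hq.ne'), Complex.cpow_natCast]
  ring

theorem integral_gammaKernel (hw : 0 < w.re) (hx : 0 < x) :
    ∫ q in Set.Ioi 0, gammaKernel w x q = (x : ℂ) ^ (-w) * Complex.Gamma w := by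
  have harg : Complex.arg x ≠ Real.pi := by
    rw [Complex.arg_ofReal_of_nonneg hx.le]
    exact Real.pi_pos.ne
  rw [Complex.cpow_neg, ← Complex.inv_cpow _ _ harg, ← one_div]
  exact Complex.integral_cpow_mul_exp_neg_mul_Ioi hw hx

theorem cpow_neg_mul_Gamma_ne_zero (hw : 0 < w.re) (hx : 0 < x) :
    (x : ℂ) ^ (-w) * Complex.Gamma w ≠ 0 :=
  mul_ne_zero (by simp [Complex.cpow_eq_zero_iff, hx.ne']) (Complex.Gamma_ne_zero_of_re_pos hw)

theorem integrableOn_gammaKernel (hw : 0 < w.re) (hx : 0 < x) :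
    IntegrableOn (gammaKernel w x) (Set.Ioi 0) := by
  by_contra h
  exact cpow_neg_mul_Gamma_ne_zero hw hx
    ((integral_gammaKernel hw hx).symm.trans (integral_undef h))

theorem Gamma_add_natCast_eq_ascPochhammer_mul (hw : 0 < w.re) (l : ℕ) :
    Complex.Gamma (w + l) = (ascPochhammer ℂ l).eval w * Complex.Gamma w := by
  have hpole (n : ℕ) : w ≠ -n := by
    rintro rfl
    rw [Complex.neg_re, Complex.natCast_re] at hw
    linarith [n.cast_nonneg (α := ℝ)]
  rw [← Complex.Gamma_add_nat_div_Gamma_eq w hpole,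
    div_mul_cancel₀ _ (Complex.Gamma_ne_zero_of_re_pos hw)]

/-- The coefficients `(w)_l / z ^ l` of the divergent expansion in powers of `1 / x` of the
incomplete Gamma integral `∫ t in Ioi x, exp (z t) * t ^ (-(w + 1))`, up to its leading factor. -/
noncomputable def incompleteGammaCoeff (w z : ℂ) (l : ℕ) : ℂ :=
  (ascPochhammer ℂ l).eval w * z⁻¹ ^ l

theorem gammaKernel_mul_ascPochhammer (w z : ℂ) (x : ℝ) (hq : 0 < q) (k : ℕ) :
    gammaKernel w x q * (ascPochhammer ℂ k).eval (x * q / z) =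
      ∑ l ∈ range (k + 1),
        (x / z) ^ l * (Nat.stirlingFirst k l : ℂ) * gammaKernel (w + l) x q := by
  rw [← stirlingTransform_pow, stirlingTransform, mul_sum]
  refine sum_congr rfl fun l _ => ?_
  rw [← gammaKernel_mul_pow w x hq, mul_div_right_comm, mul_pow]
  ring

theorem add_natCast_re_pos (hw : 0 < w.re) (l : ℕ) : 0 < (w + l).re := by
  rw [Complex.add_re, Complex.natCast_re]
  positivity

theorem integrableOn_gammaKernel_mul_ascPochhammer (hw : 0 < w.re) (hx : 0 < x) (z : ℂ) (k : ℕ) :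
    IntegrableOn (fun q : ℝ => gammaKernel w x q * (ascPochhammer ℂ k).eval (x * q / z))
      (Set.Ioi 0) := by
  refine IntegrableOn.congr_fun (integrable_finsetSum _ fun l _ => ?_)
    (fun q hq => (gammaKernel_mul_ascPochhammer w z x hq k).symm) measurableSet_Ioi
  exact (integrableOn_gammaKernel (add_natCast_re_pos hw l) hx).const_mul _

theorem integral_gammaKernel_mul_ascPochhammer (hw : 0 < w.re) (hx : 0 < x) (z : ℂ) (k : ℕ) :
    ∫ q in Set.Ioi (0 : ℝ), gammaKernel w x q * (ascPochhammer ℂ k).eval (x * q / z) =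
      (x : ℂ) ^ (-w) * Complex.Gamma w * stirlingTransform (incompleteGammaCoeff w z) k := by
  have hx₀ : (x : ℂ) ≠ 0 := Complex.ofReal_ne_zero.mpr hx.ne'
  rw [setIntegral_congr_fun measurableSet_Ioi
      fun q hq => gammaKernel_mul_ascPochhammer w z x hq k,
    integral_finsetSum _ fun l _ =>
      (integrableOn_gammaKernel (add_natCast_re_pos hw l) hx).const_mul _,
    stirlingTransform, mul_sum]
  refine sum_congr rfl fun l _ => ?_
  rw [integral_const_mul, integral_gammaKernel (add_natCast_re_pos hw l) hx,
    Gamma_add_natCast_eq_ascPochhammer_mul hw, neg_add, Complex.cpow_add _ _ hx₀,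
    Complex.cpow_neg _ (l : ℂ), Complex.cpow_natCast, incompleteGammaCoeff, div_pow, inv_pow]
  field_simp

theorem re_ofReal_mul_ofReal_div (hz : z.re = 0) (x q : ℝ) : ((x : ℂ) * q / z).re = 0 := by
  rw [← Complex.ofReal_mul, div_eq_mul_inv, Complex.re_ofReal_mul, Complex.inv_re, hz, zero_div,
    mul_zero]

theorem norm_gammaKernel_mul_ascPochhammer_le (hz : z.re = 0) (hzπ : 2 * Real.pi ≤ ‖z‖)
    (hx : 0 < x) (w : ℂ) (k : ℕ) (hq : 0 < q) :
    ‖gammaKernel w x q * (ascPochhammer ℂ (k + 1)).eval (x * q / z)‖ ≤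
      k.factorial * (x * ‖gammaKernel (w + 1) (x / 2) q‖) := by
  have hz_pos : 0 < ‖z‖ := (mul_pos two_pos Real.pi_pos).trans_le hzπ
  have hv : ‖(x : ℂ) * q / z‖ = x * q / ‖z‖ := by
    simp [abs_of_pos hx, abs_of_pos hq]
  have hv_le : ‖(x : ℂ) * q / z‖ ≤ x * q := by
    rw [hv]
    exact div_le_self (by positivity) (by linarith [Real.pi_gt_three])
  have hexp : Real.pi * ‖(x : ℂ) * q / z‖ ≤ x / 2 * q := by
    rw [hv, ← mul_div_assoc, div_le_iff₀ hz_pos]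
    calc Real.pi * (x * q) = x / 2 * q * (2 * Real.pi) := by ring
      _ ≤ x / 2 * q * ‖z‖ := by gcongr
  have hpoch : ‖(ascPochhammer ℂ (k + 1)).eval ((x : ℂ) * q / z)‖ ≤
      x * q * Real.exp (x / 2 * q) * k.factorial :=
    (norm_ascPochhammer_eval_le (re_ofReal_mul_ofReal_div hz x q) k).trans (by gcongr)
  have hsplit : Real.exp (-(x / 2 * q)) = Real.exp (-(x * q)) * Real.exp (x / 2 * q) := by
    rw [← Real.exp_add]
    ring_nf
  rw [norm_mul, norm_gammaKernel _ _ hq, norm_gammaKernel _ _ hq, Complex.add_re, Complex.one_re,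
    add_sub_right_comm, Real.rpow_add_one hq.ne', hsplit]
  calc q ^ (w.re - 1) * Real.exp (-(x * q)) * ‖(ascPochhammer ℂ (k + 1)).eval ((x : ℂ) * q / z)‖
      ≤ q ^ (w.re - 1) * Real.exp (-(x * q)) * (x * q * Real.exp (x / 2 * q) * k.factorial) := by
        gcongr
    _ = _ := by ring

theorem integral_norm_gammaKernel_mul_ascPochhammer_le (hz : z.re = 0)
    (hzπ : 2 * Real.pi ≤ ‖z‖) (hw : 0 < w.re) (hx : 0 < x) (k : ℕ) :
    ∫ q in Set.Ioi (0 : ℝ),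
        ‖gammaKernel w x q * (ascPochhammer ℂ (k + 1)).eval (x * q / z)‖ ≤
      k.factorial * (x * ∫ q in Set.Ioi (0 : ℝ), ‖gammaKernel (w + 1) (x / 2) q‖) := by
  have hw₁ : 0 < (w + 1).re := by simpa using add_natCast_re_pos hw 1
  rw [← integral_const_mul, ← integral_const_mul]
  exact setIntegral_mono_on (integrableOn_gammaKernel_mul_ascPochhammer hw hx z _).norm
    (((integrableOn_gammaKernel hw₁ (half_pos hx)).norm.const_mul x).const_mul _)
    measurableSet_Ioi fun q hq => norm_gammaKernel_mul_ascPochhammer_le hz hzπ hx w k hq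

theorem norm_stirlingTransform_incompleteGammaCoeff_le (hz : z.re = 0)
    (hzπ : 2 * Real.pi ≤ ‖z‖) (hw : 0 < w.re) (hx : 0 < x) (k : ℕ) :
    ‖stirlingTransform (incompleteGammaCoeff w z) (k + 1)‖ ≤
      (x * ∫ q in Set.Ioi (0 : ℝ), ‖gammaKernel (w + 1) (x / 2) q‖) /
        ‖(x : ℂ) ^ (-w) * Complex.Gamma w‖ * k.factorial := by
  rw [div_mul_eq_mul_div,
    le_div_iff₀' (norm_pos_iff.mpr (cpow_neg_mul_Gamma_ne_zero hw hx)), ← norm_mul,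
    ← integral_gammaKernel_mul_ascPochhammer hw hx, mul_comm _ (k.factorial : ℝ)]
  exact (norm_integral_le_integral_norm _).trans
    (integral_norm_gammaKernel_mul_ascPochhammer_le hz hzπ hw hx k)

theorem hasSum_gammaKernel_mul_ascPochhammer_div_risingProd (hz : z.re = 0) (hz₀ : z ≠ 0)
    (hx : 0 < x) (w : ℂ) (hq : 0 < q) :
    HasSum (fun k : ℕ => gammaKernel w x q * (ascPochhammer ℂ (k + 1)).eval (x * q / z) /
        risingProd x (k + 1))
      (gammaKernel (w + 1) x q / (z - q)) := by
  have hx₀ : (x : ℂ) ≠ 0 := Complex.ofReal_ne_zero.mpr hx.ne'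
  have hzq : z - q ≠ 0 := sub_ne_zero.mpr fun h => by simp [h, hq.ne'] at hz
  have hvalue : gammaKernel (w + 1) x q / (z - q) =
      gammaKernel w x q * (x * q / z / (x - x * q / z)) := by
    have hkernel := gammaKernel_mul_pow w x hq 1
    rw [pow_one, Nat.cast_one] at hkernel
    have hdenom : (x : ℂ) - x * q / z = x * (z - q) / z := by field_simp
    rw [← hkernel, hdenom]
    field_simp
  have hgeom := hasSum_inverseFactorialTerm_pow (x := x) (by simpa using hx)
    (re_ofReal_mul_ofReal_div hz x q)
  simpa only [hvalue, inverseFactorialTerm, stirlingTransform_pow, mul_div_assoc] using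
    hgeom.mul_left (gammaKernel w x q)

theorem hasSum_inverseFactorialTerm_eq_integral_gammaKernel_div (hz : z.re = 0)
    (hzπ : 2 * Real.pi ≤ ‖z‖) (hw : 0 < w.re) (hx : 0 < x) :
    HasSum (fun k => (x : ℂ) ^ (-w) * Complex.Gamma w *
        inverseFactorialTerm (incompleteGammaCoeff w z) x (k + 1))
      (∫ q in Set.Ioi (0 : ℝ), gammaKernel (w + 1) x q / (z - q)) := by
  have hz₀ : z ≠ 0 := norm_pos_iff.mp ((mul_pos two_pos Real.pi_pos).trans_le hzπ)
  have hbound : Summable fun k : ℕ => ∫ q in Set.Ioi (0 : ℝ),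
      ‖gammaKernel w x q * (ascPochhammer ℂ (k + 1)).eval (x * q / z) /
        risingProd x (k + 1)‖ := by
    refine .of_nonneg_of_le (fun k => integral_nonneg fun _ => norm_nonneg _) (fun k => ?_)
      ((summable_factorial_div_norm_risingProd (x := x) (by simpa using hx)).mul_right
        (x * ∫ q in Set.Ioi (0 : ℝ), ‖gammaKernel (w + 1) (x / 2) q‖))
    simp only [norm_div]
    rw [integral_div, div_mul_eq_mul_div]
    gcongr
    exact integral_norm_gammaKernel_mul_ascPochhammer_le hz hzπ hw hx k
  have hsum := hasSum_integral_of_summable_integral_norm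
    (fun k => (integrableOn_gammaKernel_mul_ascPochhammer hw hx z (k + 1)).div_const
      (risingProd x (k + 1))) hbound
  rw [setIntegral_congr_fun measurableSet_Ioi fun q hq =>
    (hasSum_gammaKernel_mul_ascPochhammer_div_risingProd hz hz₀ hx w hq).tsum_eq] at hsum
  simp only [integral_div, integral_gammaKernel_mul_ascPochhammer hw hx] at hsum
  simpa only [inverseFactorialTerm, mul_div_assoc] using hsum

theorem aestronglyMeasurable_uncurry_gammaKernel (w : ℂ) (x : ℝ) :
    AEStronglyMeasurable (fun p : ℝ × ℝ => gammaKernel w p.1 p.2)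
      ((volume.restrict (Set.Ioi x)).prod (volume.restrict (Set.Ioi 0))) := by
  rw [Measure.prod_restrict]
  refine ContinuousOn.aestronglyMeasurable (fun p hp => ?_)
    (measurableSet_Ioi.prod measurableSet_Ioi)
  have hslit : (p.2 : ℂ) ∈ Complex.slitPlane := Complex.ofReal_mem_slitPlane.mpr hp.2
  refine ContinuousAt.continuousWithinAt (ContinuousAt.mul ?_ (by fun_prop))
  exact ContinuousAt.cpow (by fun_prop) (by fun_prop) hslit

theorem integrable_uncurry_gammaKernel (hw : 1 < w.re) (hx : 0 < x) :
    Integrable (fun p : ℝ × ℝ => gammaKernel w p.1 p.2)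
      ((volume.restrict (Set.Ioi x)).prod (volume.restrict (Set.Ioi 0))) := by
  rw [integrable_prod_iff (aestronglyMeasurable_uncurry_gammaKernel w x)]
  constructor
  · filter_upwards [ae_restrict_mem measurableSet_Ioi] with t ht
    exact integrableOn_gammaKernel (zero_lt_one.trans hw) (hx.trans ht)
  · have hpow : IntegrableOn (fun t : ℝ => t ^ (-w.re) * Real.Gamma w.re) (Set.Ioi x) :=
      (integrableOn_Ioi_rpow_of_lt (by linarith) hx).mul_const _
    refine IntegrableOn.congr_fun hpow (fun t ht => ?_) measurableSet_Ioi
    have ht₀ : 0 < t := hx.trans ht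
    rw [setIntegral_congr_fun measurableSet_Ioi fun q hq => norm_gammaKernel w t hq,
      Real.integral_rpow_mul_exp_neg_mul_Ioi (by linarith) ht₀, one_div, Real.inv_rpow ht₀.le,
      Real.rpow_neg ht₀.le]

theorem integral_exp_mul_gammaKernel (hz : z.re ≤ 0) (hq : 0 < q) (x : ℝ) :
    ∫ t in Set.Ioi x, Complex.exp (z * t) * gammaKernel w t q =
      -Complex.exp (z * x) * (gammaKernel w x q / (z - q)) := by
  have hkernel (t : ℝ) : Complex.exp (z * t) * gammaKernel w t q =
      (q : ℂ) ^ (w - 1) * Complex.exp ((z - q) * t) := by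
    rw [gammaKernel, show (z - q) * t = z * t + -(t * q) by ring, Complex.exp_add]
    ring
  have hre : (z - q).re < 0 := by
    rw [Complex.sub_re, Complex.ofReal_re]
    linarith
  rw [mul_div_assoc', neg_mul, hkernel x]
  simp only [hkernel]
  rw [integral_const_mul, integral_exp_mul_complex_Ioi hre]
  ring

theorem Gamma_mul_integral_exp_mul_cpow_eq (hz : z.re ≤ 0) (hw : 1 < w.re) (hx : 0 < x) :
    Complex.Gamma w * ∫ t in Set.Ioi x, Complex.exp (z * t) * (t : ℂ) ^ (-w) =
      -Complex.exp (z * x) * ∫ q in Set.Ioi (0 : ℝ), gammaKernel w x q / (z - q) := by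
  have hbound : ∀ᵐ p : ℝ × ℝ ∂(volume.restrict (Set.Ioi x)).prod (volume.restrict (Set.Ioi 0)),
      ‖Complex.exp (z * p.1)‖ ≤ 1 := by
    rw [Measure.prod_restrict]
    filter_upwards [ae_restrict_mem (measurableSet_Ioi.prod measurableSet_Ioi)] with p hp
    simpa [Complex.norm_exp] using mul_nonpos_of_nonpos_of_nonneg hz (hx.trans hp.1).le
  have hint : Integrable (fun p : ℝ × ℝ => Complex.exp (z * p.1) * gammaKernel w p.1 p.2)
      ((volume.restrict (Set.Ioi x)).prod (volume.restrict (Set.Ioi 0))) :=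
    (integrable_uncurry_gammaKernel hw hx).bdd_mul
      (Continuous.aestronglyMeasurable (by fun_prop)) hbound
  have inner_q (t : ℝ) (ht : t ∈ Set.Ioi x) :
      ∫ q in Set.Ioi 0, Complex.exp (z * t) * gammaKernel w t q =
        Complex.Gamma w * (Complex.exp (z * t) * (t : ℂ) ^ (-w)) := by
    rw [integral_const_mul, integral_gammaKernel (zero_lt_one.trans hw) (hx.trans ht)]
    ring
  rw [← integral_const_mul, ← integral_const_mul,
    ← setIntegral_congr_fun measurableSet_Ioi inner_q,
    ← setIntegral_congr_fun measurableSet_Ioi fun q hq =>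
      integral_exp_mul_gammaKernel (w := w) hz (Set.mem_Ioi.mp hq) x]
  exact integral_integral_swap hint

theorem hasSum_inverseFactorialTerm_incompleteGammaCoeff (hz : z.re = 0)
    (hzπ : 2 * Real.pi ≤ ‖z‖) (hw : 0 < w.re) (hx : 0 < x) :
    HasSum (fun k => inverseFactorialTerm (incompleteGammaCoeff w z) x (k + 1))
      (-w * (x : ℂ) ^ w * Complex.exp (-(z * x)) *
        ∫ t in Set.Ioi x, Complex.exp (z * t) * (t : ℂ) ^ (-(w + 1))) := by
  have hne := cpow_neg_mul_Gamma_ne_zero hw hx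
  have hw₀ : w ≠ 0 := fun h => by simp [h] at hw
  have hw₁ : 1 < (w + 1).re := by simpa using hw
  have hfubini := Gamma_mul_integral_exp_mul_cpow_eq hz.le hw₁ hx
  rw [Complex.Gamma_add_one w hw₀] at hfubini
  have hexp : Complex.exp (-(z * x)) * Complex.exp (z * x) = 1 := by simp [← Complex.exp_add]
  have hpow : (x : ℂ) ^ w * (x : ℂ) ^ (-w) = 1 := by
    rw [← Complex.cpow_add _ _ (Complex.ofReal_ne_zero.mpr hx.ne')]
    simp
  have hvalue : (x : ℂ) ^ (-w) * Complex.Gamma w * (-w * (x : ℂ) ^ w * Complex.exp (-(z * x)) *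
        ∫ t in Set.Ioi x, Complex.exp (z * t) * (t : ℂ) ^ (-(w + 1))) =
      ∫ q in Set.Ioi (0 : ℝ), gammaKernel (w + 1) x q / (z - q) := by
    linear_combination
      -((x : ℂ) ^ w * (x : ℂ) ^ (-w) * Complex.exp (-(z * x))) * hfubini +
        (∫ q in Set.Ioi (0 : ℝ), gammaKernel (w + 1) x q / (z - q)) *
          (Complex.exp (-(z * x)) * Complex.exp (z * x) * hpow + hexp)
  rw [← hasSum_mul_left_iff hne, hvalue]
  exact hasSum_inverseFactorialTerm_eq_integral_gammaKernel_div hz hzπ hw hx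

end GammaKernel

section Superposition

variable {ι : Type*} {u : ι → ℕ → ℂ} {c : ℕ → ℂ} {B : ι → ℝ} {x : ℂ}

theorem hasSum_stirlingTransform (hc : ∀ l, HasSum (fun j => u j l) (c l)) (k : ℕ) :
    HasSum (fun j => stirlingTransform (u j) k) (stirlingTransform c k) :=
  hasSum_sum fun l _ => (hc l).mul_right _

theorem summable_norm_inverseFactorialTerm_of_hasSum
    (hc : ∀ l, HasSum (fun j => u j l) (c l)) (hB : Summable B)
    (hu : ∀ j k, ‖stirlingTransform (u j) (k + 1)‖ ≤ B j * k.factorial) (hx : 0 < x.re) :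
    Summable fun k => ‖inverseFactorialTerm c x (k + 1)‖ :=
  summable_norm_inverseFactorialTerm_of_norm_le hx fun k =>
    (hasSum_stirlingTransform hc (k + 1)).norm_le_of_bounded (hB.hasSum.mul_right _)
      fun j => hu j k

theorem tsum_inverseFactorialTerm_of_hasSum
    (hc : ∀ l, HasSum (fun j => u j l) (c l)) (hB : Summable B)
    (hu : ∀ j k, ‖stirlingTransform (u j) (k + 1)‖ ≤ B j * k.factorial) (hx : 0 < x.re) :
    ∑' k, inverseFactorialTerm c x (k + 1) =
      ∑' j, ∑' k, inverseFactorialTerm (u j) x (k + 1) := by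
  have hB_nonneg (j : ι) : 0 ≤ B j := by simpa using (norm_nonneg _).trans (hu j 0)
  have hprod : Summable (Function.uncurry fun j k => inverseFactorialTerm (u j) x (k + 1)) := by
    refine .of_norm_bounded (hB.mul_of_nonneg (summable_factorial_div_norm_risingProd hx)
      hB_nonneg fun k => by positivity) fun ⟨j, k⟩ => ?_
    rw [Function.uncurry_apply_pair, inverseFactorialTerm, norm_div, ← mul_div_assoc]
    gcongr
    exact hu j k
  have hterm (k : ℕ) : inverseFactorialTerm c x (k + 1) =
      ∑' j, inverseFactorialTerm (u j) x (k + 1) :=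
    ((hasSum_stirlingTransform hc (k + 1)).div_const _).tsum_eq.symm
  rw [tsum_congr hterm]
  exact hprod.tsum_comm

end Superposition

section PeriodicBernoulli

/-- The frequencies `2πij` of the Fourier series of the 1-periodic functions `t ↦ B_n({t})`. -/
noncomputable def fourierFreq (j : ℤ) : ℂ := 2 * Real.pi * Complex.I * j

@[simp]
theorem fourierFreq_zero : fourierFreq 0 = 0 := by simp [fourierFreq]

@[simp]
theorem fourierFreq_re (j : ℤ) : (fourierFreq j).re = 0 := by simp [fourierFreq]

theorem two_pi_le_norm_fourierFreq {j : ℤ} (hj : j ≠ 0) : 2 * Real.pi ≤ ‖fourierFreq j‖ := by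
  have hj₁ : (1 : ℝ) ≤ |(j : ℝ)| := mod_cast Int.one_le_abs hj
  simpa [fourierFreq, abs_of_pos Real.pi_pos] using
    le_mul_of_one_le_right (by positivity : 0 ≤ 2 * Real.pi) hj₁

theorem norm_exp_fourierFreq_mul (j : ℤ) (t : ℝ) : ‖Complex.exp (fourierFreq j * t)‖ = 1 := by
  simp [Complex.norm_exp]

theorem exp_fourierFreq_mul_fract (j : ℤ) (t : ℝ) :
    Complex.exp (fourierFreq j * Int.fract t) = Complex.exp (fourierFreq j * t) := by
  rw [Complex.exp_eq_exp_iff_exists_int]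
  refine ⟨-(j * ⌊t⌋), ?_⟩
  rw [Int.fract, fourierFreq]
  push_cast
  ring

variable {n : ℕ}

theorem hasSum_exp_fourierFreq_mul_div_pow (hn : 2 ≤ n) (t : ℝ) :
    HasSum (fun j : ℤ => Complex.exp (fourierFreq j * t) / fourierFreq j ^ n)
      (-(bernoulliFun n (Int.fract t) / n.factorial : ℂ)) := by
  have hseries := (hasSum_one_div_pow_mul_fourier_mul_bernoulliFun hn
    ⟨Int.fract_nonneg t, (Int.fract_lt_one t).le⟩).div_const ((2 * Real.pi * Complex.I) ^ n)
  have hne : (2 * Real.pi * Complex.I) ^ n ≠ 0 := by simp [Real.pi_ne_zero]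
  have hvalue : -(2 * Real.pi * Complex.I) ^ n / n.factorial * bernoulliFun n (Int.fract t) /
      (2 * Real.pi * Complex.I) ^ n = -(bernoulliFun n (Int.fract t) / n.factorial : ℂ) := by
    field_simp
  rw [hvalue] at hseries
  refine hseries.congr_fun fun j => ?_
  rw [fourier_coe_apply, ← exp_fourierFreq_mul_fract, fourierFreq, mul_pow, Complex.ofReal_one,
    div_one]
  ring

theorem summable_norm_inv_fourierFreq_pow (hn : 2 ≤ n) :
    Summable fun j : ℤ => (‖fourierFreq j‖ ^ n)⁻¹ := by
  simpa using (hasSum_exp_fourierFreq_mul_div_pow hn 0).summable.norm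

/-- The tail integral `∫ t in Ioi x, B_n({t}) t ^ s` of the Euler–Maclaurin remainder. -/
noncomputable def bernoulliTail (n : ℕ) (s : ℂ) (x : ℝ) : ℂ :=
  ∫ t in Set.Ioi x, (bernoulliFun n (Int.fract t) : ℂ) * (t : ℂ) ^ s

theorem hasSum_integral_exp_fourierFreq_mul_cpow {s : ℂ} {x : ℝ} (hn : 2 ≤ n) (hs : s.re < -1)
    (hx : 0 < x) :
    HasSum (fun j : ℤ => (fourierFreq j ^ n)⁻¹ *
        ∫ t in Set.Ioi x, Complex.exp (fourierFreq j * t) * (t : ℂ) ^ s)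
      (-(bernoulliTail n s x / n.factorial)) := by
  have hpow : IntegrableOn (fun t : ℝ => (t : ℂ) ^ s) (Set.Ioi x) :=
    integrableOn_Ioi_cpow_of_lt hs hx
  have hint (j : ℤ) : IntegrableOn
      (fun t : ℝ => (fourierFreq j ^ n)⁻¹ * (Complex.exp (fourierFreq j * t) * (t : ℂ) ^ s))
      (Set.Ioi x) :=
    (hpow.bdd_mul (c := 1) (Continuous.aestronglyMeasurable (by fun_prop))
      (.of_forall fun t => (norm_exp_fourierFreq_mul j t).le)).const_mul _
  have hsummable : Summable fun j : ℤ => ∫ t in Set.Ioi x,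
      ‖(fourierFreq j ^ n)⁻¹ * (Complex.exp (fourierFreq j * t) * (t : ℂ) ^ s)‖ := by
    simp only [norm_mul, norm_exp_fourierFreq_mul, one_mul, integral_const_mul, norm_inv, norm_pow]
    exact (summable_norm_inv_fourierFreq_pow hn).mul_right _
  have hsum := hasSum_integral_of_summable_integral_norm hint hsummable
  have hinner (t : ℝ) :
      ∑' j, (fourierFreq j ^ n)⁻¹ * (Complex.exp (fourierFreq j * t) * (t : ℂ) ^ s) =
        -(n.factorial : ℂ)⁻¹ * (bernoulliFun n (Int.fract t) * (t : ℂ) ^ s) := by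
    have hseries := ((hasSum_exp_fourierFreq_mul_div_pow hn t).mul_right ((t : ℂ) ^ s)).tsum_eq
    calc _ = ∑' j, Complex.exp (fourierFreq j * t) / fourierFreq j ^ n * (t : ℂ) ^ s :=
          tsum_congr fun j => by ring
      _ = _ := by rw [hseries]; ring
  simp only [hinner, integral_const_mul] at hsum
  rw [bernoulliTail, div_eq_inv_mul, ← neg_mul]
  exact hsum

/-- The coefficients `(w)_l B_{l + n}(θ) / (l + n)!` of the expansion in powers of `1 / x` of the
Euler–Maclaurin remainder, with the factor not depending on `l` left out. -/
noncomputable def bernoulliCoeff (w : ℂ) (n : ℕ) (θ : ℝ) (l : ℕ) : ℂ :=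
  (ascPochhammer ℂ l).eval w * (bernoulliFun (l + n) θ / (l + n).factorial)

/-- The contribution of the `j`-th Fourier mode of `B_{l + n}({x})` to `bernoulliCoeff`. For `n ≠ 0`
it vanishes at `j = 0`, where `fourierFreq j ^ n = 0`. -/
noncomputable def fourierModeCoeff (w : ℂ) (n : ℕ) (x : ℝ) (j : ℤ) (l : ℕ) : ℂ :=
  -Complex.exp (fourierFreq j * x) / fourierFreq j ^ n * incompleteGammaCoeff w (fourierFreq j) l

theorem hasSum_fourierModeCoeff (hn : 2 ≤ n) (w : ℂ) (x : ℝ) (l : ℕ) :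
    HasSum (fun j => fourierModeCoeff w n x j l) (bernoulliCoeff w n (Int.fract x) l) := by
  have hseries := (hasSum_exp_fourierFreq_mul_div_pow (hn.trans (n.le_add_left l)) x).mul_left
    (-(ascPochhammer ℂ l).eval w)
  rw [neg_mul_neg] at hseries
  refine hseries.congr_fun fun j => ?_
  rw [fourierModeCoeff, incompleteGammaCoeff, pow_add, inv_pow]
  ring

theorem fourierModeCoeff_zero (hn : n ≠ 0) (w : ℂ) (x : ℝ) :
    fourierModeCoeff w n x 0 = fun _ => 0 := by
  ext l
  simp [fourierModeCoeff, hn]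

variable {w : ℂ} {x : ℝ}

theorem exists_norm_stirlingTransform_fourierModeCoeff_le (hn : n ≠ 0) (hw : 0 < w.re)
    (hx : 0 < x) : ∃ C, ∀ j k, ‖stirlingTransform (fourierModeCoeff w n x j) (k + 1)‖ ≤
      (‖fourierFreq j‖ ^ n)⁻¹ * C * k.factorial := by
  obtain ⟨C, hC⟩ : ∃ C, ∀ j ≠ 0, ∀ k,
      ‖stirlingTransform (incompleteGammaCoeff w (fourierFreq j)) (k + 1)‖ ≤ C * k.factorial :=
    ⟨_, fun j hj => norm_stirlingTransform_incompleteGammaCoeff_le (fourierFreq_re j)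
      (two_pi_le_norm_fourierFreq hj) hw hx⟩
  refine ⟨C, fun j k => ?_⟩
  rcases eq_or_ne j 0 with rfl | hj
  · simp [fourierModeCoeff_zero hn, stirlingTransform, hn]
  · unfold fourierModeCoeff
    rw [stirlingTransform_const_mul, norm_mul, norm_div, norm_neg, norm_exp_fourierFreq_mul,
      norm_pow, one_div, mul_assoc]
    gcongr
    exact hC j hj k

theorem hasSum_inverseFactorialTerm_fourierModeCoeff (hn : n ≠ 0) (hw : 0 < w.re) (hx : 0 < x)
    (j : ℤ) :
    HasSum (fun k => inverseFactorialTerm (fourierModeCoeff w n x j) x (k + 1))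
      (w * (x : ℂ) ^ w * ((fourierFreq j ^ n)⁻¹ *
        ∫ t in Set.Ioi x, Complex.exp (fourierFreq j * t) * (t : ℂ) ^ (-(w + 1)))) := by
  rcases eq_or_ne j 0 with rfl | hj
  · simp [fourierModeCoeff_zero hn, inverseFactorialTerm, stirlingTransform, hn, hasSum_zero]
  · have hsum := (hasSum_inverseFactorialTerm_incompleteGammaCoeff (fourierFreq_re j)
      (two_pi_le_norm_fourierFreq hj) hw hx).mul_left
        (-Complex.exp (fourierFreq j * x) / fourierFreq j ^ n)
    have hexp : Complex.exp (fourierFreq j * x) * Complex.exp (-(fourierFreq j * x)) = 1 := by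
      simp [← Complex.exp_add]
    simp only [← inverseFactorialTerm_const_mul] at hsum
    refine (congrArg (HasSum _) ?_).mp hsum
    linear_combination (w * (x : ℂ) ^ w * (fourierFreq j ^ n)⁻¹ *
      ∫ t in Set.Ioi x, Complex.exp (fourierFreq j * t) * (t : ℂ) ^ (-(w + 1))) * hexp

theorem summable_norm_inverseFactorialTerm_bernoulliCoeff (hn : 2 ≤ n) (hw : 0 < w.re)
    (hx : 0 < x) :
    Summable fun k => ‖inverseFactorialTerm (bernoulliCoeff w n (Int.fract x)) x (k + 1)‖ := by
  obtain ⟨C, hC⟩ := exists_norm_stirlingTransform_fourierModeCoeff_le (by lia : n ≠ 0) hw hx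
  exact summable_norm_inverseFactorialTerm_of_hasSum (hasSum_fourierModeCoeff hn w x)
    ((summable_norm_inv_fourierFreq_pow hn).mul_right C) hC (by simpa using hx)

theorem tsum_inverseFactorialTerm_bernoulliCoeff (hn : 2 ≤ n) (hw : 0 < w.re) (hx : 0 < x) :
    ∑' k, inverseFactorialTerm (bernoulliCoeff w n (Int.fract x)) x (k + 1) =
      -(w * (x : ℂ) ^ w * (bernoulliTail n (-(w + 1)) x / n.factorial)) := by
  have hn₀ : n ≠ 0 := by lia
  obtain ⟨C, hC⟩ := exists_norm_stirlingTransform_fourierModeCoeff_le hn₀ hw hx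
  rw [tsum_inverseFactorialTerm_of_hasSum (hasSum_fourierModeCoeff hn w x)
    ((summable_norm_inv_fourierFreq_pow hn).mul_right C) hC (by simpa using hx),
    tsum_congr fun j => (hasSum_inverseFactorialTerm_fourierModeCoeff hn₀ hw hx j).tsum_eq,
    tsum_mul_left, (hasSum_integral_exp_fourierFreq_mul_cpow hn (by simpa using hw) hx).tsum_eq,
    mul_neg]

end PeriodicBernoulli

section BernoulliTail

variable {n : ℕ} {s : ℂ} {x : ℝ}

theorem exists_norm_bernoulliFun_fract_le (n : ℕ) :
    ∃ C, ∀ t : ℝ, ‖(bernoulliFun n (Int.fract t) : ℂ)‖ ≤ C := by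
  obtain ⟨C, hC⟩ := isCompact_Icc.exists_bound_of_continuousOn
    (continuous_bernoulliFun n).continuousOn
  refine ⟨C, fun t => ?_⟩
  rw [Complex.norm_real]
  exact hC _ ⟨Int.fract_nonneg t, (Int.fract_lt_one t).le⟩

theorem measurable_bernoulliFun_fract (n : ℕ) :
    Measurable fun t : ℝ => (bernoulliFun n (Int.fract t) : ℂ) :=
  Complex.measurable_ofReal.comp ((continuous_bernoulliFun n).measurable.comp measurable_fract)

theorem integrableOn_bernoulliFun_fract_mul_cpow (n : ℕ) (hs : s.re < -1) (hx : 0 < x) :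
    IntegrableOn (fun t : ℝ => (bernoulliFun n (Int.fract t) : ℂ) * (t : ℂ) ^ s) (Set.Ioi x) := by
  obtain ⟨C, hC⟩ := exists_norm_bernoulliFun_fract_le n
  exact (integrableOn_Ioi_cpow_of_lt hs hx).bdd_mul
    (measurable_bernoulliFun_fract n).aestronglyMeasurable (.of_forall hC)

theorem continuous_bernoulliFun_fract (hn : n ≠ 1) :
    Continuous fun t : ℝ => (bernoulliFun n (Int.fract t) : ℂ) :=
  Complex.continuous_ofReal.comp ((continuous_bernoulliFun n).continuousOn.comp_fract''
    (bernoulliFun_endpoints_eq_of_ne_one hn).symm)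

theorem hasDerivWithinAt_bernoulliFun_fract (n : ℕ) (t : ℝ) :
    HasDerivWithinAt (fun t : ℝ => (bernoulliFun (n + 1) (Int.fract t) : ℂ))
      ((n + 1) * bernoulliFun n (Int.fract t)) (Set.Ioi t) t := by
  have hderiv : HasDerivAt (fun y : ℝ => (bernoulliFun (n + 1) (y - ⌊t⌋) : ℂ))
      ((n + 1) * bernoulliFun n (Int.fract t)) t := by
    simpa using
      ((hasDerivAt_bernoulliFun (n + 1) (t - ⌊t⌋)).comp_sub_const t ⌊t⌋).ofReal_comp
  refine hderiv.hasDerivWithinAt.congr_of_eventuallyEq ?_ rfl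
  filter_upwards [self_mem_nhdsWithin,
    nhdsWithin_le_nhds (eventually_lt_nhds (Int.lt_floor_add_one t))] with y hty hy
  have hfloor : ⌊y⌋ = ⌊t⌋ := Int.floor_eq_iff.mpr ⟨(Int.floor_le t).trans hty.le, hy⟩
  rw [Int.fract, hfloor]

theorem tendsto_bernoulliFun_fract_mul_cpow_atTop (n : ℕ) (hs : s.re < 0) :
    Tendsto (fun t : ℝ => (bernoulliFun n (Int.fract t) : ℂ) * (t : ℂ) ^ s) atTop (𝓝 0) := by
  obtain ⟨C, hC⟩ := exists_norm_bernoulliFun_fract_le n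
  have hlim : Tendsto (fun t : ℝ => C * t ^ s.re) atTop (𝓝 0) := by
    simpa using (tendsto_rpow_neg_atTop (neg_pos.mpr hs)).const_mul C
  refine squeeze_zero_norm' ?_ hlim
  filter_upwards [eventually_gt_atTop 0] with t ht
  rw [norm_mul, Complex.norm_cpow_eq_rpow_re_of_pos ht]
  gcongr
  exact hC t

theorem integral_Ioi_of_hasDerivWithinAt_Ioi_of_tendsto {E : Type*} [NormedAddCommGroup E]
    [NormedSpace ℝ E] [CompleteSpace E] {f f' : ℝ → E} {a : ℝ} {L : E}
    (hcont : ContinuousOn f (Set.Ici a))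
    (hderiv : ∀ t ∈ Set.Ioi a, HasDerivWithinAt f (f' t) (Set.Ioi t) t)
    (hint : IntegrableOn f' (Set.Ioi a)) (hlim : Tendsto f atTop (𝓝 L)) :
    ∫ t in Set.Ioi a, f' t = L - f a := by
  refine tendsto_nhds_unique (intervalIntegral_tendsto_integral_Ioi a hint tendsto_id)
    ((hlim.sub_const (f a)).congr' ?_)
  filter_upwards [eventually_ge_atTop a] with b hab
  refine (intervalIntegral.integral_eq_sub_of_hasDeriv_right ?_ (fun t ht => ?_) ?_).symm
  · exact hcont.mono (Set.uIcc_of_le hab ▸ Set.Icc_subset_Ici_self)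
  · exact hderiv t (min_eq_left hab ▸ ht.1)
  · exact (intervalIntegrable_iff_integrableOn_Ioc_of_le hab).mpr
      (hint.mono_set Set.Ioc_subset_Ioi_self)

theorem add_one_mul_bernoulliTail (hn : n ≠ 0) (hs : s.re < -1) (hx : 0 < x) :
    (n + 1) * bernoulliTail n s x =
      -(bernoulliFun (n + 1) (Int.fract x) * (x : ℂ) ^ s) -
        s * bernoulliTail (n + 1) (s - 1) x := by
  have hs₀ : s ≠ 0 := fun h => by norm_num [h] at hs
  have hs₁ : (s - 1).re < -1 := by rw [Complex.sub_re, Complex.one_re]; linarith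
  have hint₀ := (integrableOn_bernoulliFun_fract_mul_cpow n hs hx).const_mul ((n : ℂ) + 1)
  have hint₁ := (integrableOn_bernoulliFun_fract_mul_cpow (n + 1) hs₁ hx).const_mul s
  have hparts := integral_Ioi_of_hasDerivWithinAt_Ioi_of_tendsto
    (f := fun t : ℝ => (bernoulliFun (n + 1) (Int.fract t) : ℂ) * (t : ℂ) ^ s)
    ((continuous_bernoulliFun_fract (by lia)).continuousOn.mul fun t ht =>
      (Complex.continuousAt_ofReal_cpow_const _ _
        (.inr (hx.trans_le ht).ne')).continuousWithinAt)
    (fun t ht => ((hasDerivWithinAt_bernoulliFun_fract n t).mul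
      (hasDerivAt_ofReal_cpow_const (hx.trans ht).ne' hs₀).hasDerivWithinAt).congr_deriv
        (show _ = (n + 1) * ((bernoulliFun n (Int.fract t) : ℂ) * (t : ℂ) ^ s) +
          s * ((bernoulliFun (n + 1) (Int.fract t) : ℂ) * (t : ℂ) ^ (s - 1)) by ring))
    (hint₀.add hint₁) (tendsto_bernoulliFun_fract_mul_cpow_atTop (n + 1) (by linarith))
  rw [integral_add hint₀ hint₁, integral_const_mul, integral_const_mul] at hparts
  rw [bernoulliTail, bernoulliTail]
  linear_combination hparts

theorem bernoulliTail_eq_mellin (n : ℕ) (s : ℂ) (hx : 0 < x) :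
    bernoulliTail n s x =
      mellin ((Set.Ioi x).indicator fun t => (bernoulliFun n (Int.fract t) : ℂ)) (s + 1) := by
  have hinter : Set.Ioi 0 ∩ Set.Ioi x = Set.Ioi x :=
    Set.inter_eq_right.mpr (Set.Ioi_subset_Ioi hx.le)
  rw [bernoulliTail, mellin, ← hinter, ← setIntegral_indicator measurableSet_Ioi, hinter]
  congr 1 with t
  by_cases ht : t ∈ Set.Ioi x <;> simp [ht, mul_comm]

theorem differentiableAt_bernoulliTail (n : ℕ) (hs : s.re < -1) (hx : 0 < x) :
    DifferentiableAt ℂ (fun s => bernoulliTail n s x) s := by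
  simp only [bernoulliTail_eq_mellin n _ hx]
  set f : ℝ → ℂ := (Set.Ioi x).indicator fun t => (bernoulliFun n (Int.fract t) : ℂ)
  obtain ⟨C, hC⟩ := exists_norm_bernoulliFun_fract_le n
  have hfC (t : ℝ) : ‖f t‖ ≤ C := (norm_indicator_le_norm_self _ t).trans (hC t)
  have hmeas : Measurable f := (measurable_bernoulliFun_fract n).indicator measurableSet_Ioi
  have hloc : LocallyIntegrableOn f (Set.Ioi 0) :=
    ((continuous_const (y := C)).locallyIntegrable.mono hmeas.aestronglyMeasurable
      (.of_forall fun t => (hfC t).trans (Real.le_norm_self C))).locallyIntegrableOn _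
  have htop : f =O[atTop] fun t : ℝ => t ^ (-(0 : ℝ)) :=
    .of_bound C (.of_forall fun t => by simpa using hfC t)
  have hzero : f =O[𝓝[>] 0] fun t : ℝ => t ^ (-((s + 1).re - 1)) := by
    refine EventuallyEq.trans_isBigO (f₂ := fun _ => 0) ?_ (Asymptotics.isBigO_zero _ _)
    filter_upwards [nhdsWithin_le_nhds (eventually_lt_nhds hx)] with t ht
    exact Set.indicator_of_notMem (Set.notMem_Ioi.mpr ht.le) _
  have hmellin : DifferentiableAt ℂ (mellin f) (s + 1) :=
    mellin_differentiableAt_of_isBigO_rpow hloc htop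
      (by rw [Complex.add_re, Complex.one_re]; linarith) hzero (sub_one_lt _)
  exact hmellin.comp (f := fun s : ℂ => s + 1) s (by fun_prop)

end BernoulliTail

section FaulhaberCoeff

/-- The coefficients `(-1) ^ k C(m + 1, k) B_k(θ)` of `x ^ (m + 1 - k)` in Faulhaber's formula. -/
noncomputable def faulhaberCoeff (m : ℂ) (θ : ℝ) (k : ℕ) : ℂ :=
  (-1) ^ k * cchoose (m + 1) k * bernPoly k θ

theorem bernPoly_eq_bernoulliFun (n : ℕ) (x : ℝ) : bernPoly n x = bernoulliFun n x := by
  simp only [bernPoly, bernoulliFun, Polynomial.bernoulli, Polynomial.map_sum,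
    Polynomial.eval_finsetSum, Polynomial.map_monomial, Polynomial.eval_monomial]
  exact sum_congr rfl fun k _ => by simp [mul_comm]

theorem faulhaberCoeff_eq_ascPochhammer_mul (m : ℂ) (θ : ℝ) (k : ℕ) :
    faulhaberCoeff m θ k =
      (ascPochhammer ℂ k).eval (-(m + 1)) * (bernoulliFun k θ / k.factorial) := by
  rw [faulhaberCoeff, cchoose, bernPoly_eq_bernoulliFun, ascPochhammer_eval_neg_eq_descPochhammer,
    descPochhammer_eval_eq_prod_range]
  ring

theorem ascPochhammer_eval_add {R : Type*} [CommSemiring R] (w : R) (l a : ℕ) :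
    (ascPochhammer R (l + a)).eval w =
      (ascPochhammer R a).eval w * (ascPochhammer R l).eval (w + a) := by
  rw [add_comm l, ← ascPochhammer_mul]
  simp

theorem faulhaberCoeff_add (m : ℂ) (θ : ℝ) (l a : ℕ) :
    faulhaberCoeff m θ (l + a) =
      (ascPochhammer ℂ a).eval (-(m + 1)) * bernoulliCoeff (-(m + 1) + a) a θ l := by
  rw [faulhaberCoeff_eq_ascPochhammer_mul, ascPochhammer_eval_add, bernoulliCoeff, mul_assoc]

theorem neg_one_pow_mul_sum_Icc_S1_eq_stirlingTransform (m : ℂ) (θ : ℝ) (a k : ℕ) :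
    (-1 : ℂ) ^ (k + 1 + a) * (∑ l ∈ Icc 1 (k + 1),
        cchoose (m + 1) (l + a) * (S1 (k + 1) l : ℂ) * (bernPoly (l + a) θ : ℂ)) =
      stirlingTransform (fun l => faulhaberCoeff m θ (l + a)) (k + 1) := by
  rw [stirlingTransform_succ_eq_sum_Icc, mul_sum]
  refine sum_congr rfl fun l _ => ?_
  have hsign : (-1 : ℂ) ^ (k + 1 + a) * (-1) ^ (k + 1 + l) = (-1) ^ (l + a) := by
    rw [← pow_add, show k + 1 + a + (k + 1 + l) = l + a + 2 * (k + 1) by ring, pow_add, pow_mul]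
    simp
  rw [faulhaberCoeff, S1, stirling1Unsigned_eq_stirlingFirst, ← hsign]
  push_cast
  ring

end FaulhaberCoeff

section EulerMaclaurin

variable {m : ℂ} {x : ℝ}

theorem natCast_floor_add_one_eq {t : ℝ} (ht : 0 ≤ t) :
    (⌊t⌋₊ : ℂ) + 1 = t - bernoulliFun 1 (Int.fract t) + 1 / 2 := by
  have hfloor : (⌊t⌋₊ : ℝ) = t - Int.fract t := by
    rw [natCast_floor_eq_intCast_floor ht, Int.self_sub_fract]
  rw [bernoulliFun_one, ← Complex.ofReal_natCast, hfloor]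
  push_cast
  ring

theorem cpow_sub_one_mul_natCast_floor_add_one_eq {t : ℝ} (ht : 0 < t) (m : ℂ) :
    (t : ℂ) ^ (m - 1) * (⌊t⌋₊ + 1) = (t : ℂ) ^ m + 1 / 2 * (t : ℂ) ^ (m - 1) -
      bernoulliFun 1 (Int.fract t) * (t : ℂ) ^ (m - 1) := by
  have hpow : (t : ℂ) ^ m = t * (t : ℂ) ^ (m - 1) := by
    rw [Complex.cpow_sub _ _ (Complex.ofReal_ne_zero.mpr ht.ne'), Complex.cpow_one,
      mul_div_cancel₀ _ (Complex.ofReal_ne_zero.mpr ht.ne')]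
  rw [natCast_floor_add_one_eq ht.le, hpow]
  ring

theorem integrableOn_cpow_sub_one_mul_natCast_floor_add_one (hm : m.re < -1) (hx : 0 < x) :
    IntegrableOn (fun t : ℝ => (t : ℂ) ^ (m - 1) * (⌊t⌋₊ + 1)) (Set.Ioi x) := by
  have hm₁ : (m - 1).re < -1 := by rw [Complex.sub_re, Complex.one_re]; linarith
  exact (((integrableOn_Ioi_cpow_of_lt hm hx).add
    ((integrableOn_Ioi_cpow_of_lt hm₁ hx).const_mul (1 / 2))).sub
      (integrableOn_bernoulliFun_fract_mul_cpow 1 hm₁ hx)).congr_fun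
    (fun t ht => (cpow_sub_one_mul_natCast_floor_add_one_eq (hx.trans ht) m).symm)
      measurableSet_Ioi

theorem integral_cpow_sub_one_mul_natCast_floor_add_one (hm : m.re < -1) (hx : 0 < x) :
    ∫ t : ℝ in Set.Ioi x, (t : ℂ) ^ (m - 1) * (⌊t⌋₊ + 1) =
      -(x : ℂ) ^ (m + 1) / (m + 1) - (x : ℂ) ^ m / (2 * m) - bernoulliTail 1 (m - 1) x := by
  have hm₁ : (m - 1).re < -1 := by rw [Complex.sub_re, Complex.one_re]; linarith
  have hint := integrableOn_Ioi_cpow_of_lt hm hx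
  have hint₁ := (integrableOn_Ioi_cpow_of_lt hm₁ hx).const_mul (1 / 2)
  have hadd : IntegrableOn (fun t : ℝ => (t : ℂ) ^ m + 1 / 2 * (t : ℂ) ^ (m - 1)) (Set.Ioi x) :=
    hint.add hint₁
  rw [setIntegral_congr_fun measurableSet_Ioi fun t ht =>
      cpow_sub_one_mul_natCast_floor_add_one_eq (hx.trans ht) m,
    integral_sub hadd (integrableOn_bernoulliFun_fract_mul_cpow 1 hm₁ hx),
    integral_add hint hint₁, integral_const_mul, integral_Ioi_cpow_of_lt hm hx,
    integral_Ioi_cpow_of_lt hm₁ hx, sub_add_cancel, bernoulliTail]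
  ring

theorem tendsto_cpow_mul_natCast_floor_add_one (hm : m.re < -1) :
    Tendsto (fun t : ℝ => (t : ℂ) ^ m * (⌊t⌋₊ + 1)) atTop (𝓝 0) := by
  have hpow {s : ℂ} (hs : s.re < 0) : Tendsto (fun t : ℝ => (t : ℂ) ^ s) atTop (𝓝 0) := by
    simpa using tendsto_bernoulliFun_fract_mul_cpow_atTop 0 hs
  have hm₀ : m.re < 0 := by linarith
  have hm₁ : (m + 1).re < 0 := by rw [Complex.add_re, Complex.one_re]; linarith
  have hlim := ((hpow hm₁).add ((hpow hm₀).const_mul (1 / 2))).sub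
    (tendsto_bernoulliFun_fract_mul_cpow_atTop 1 hm₀)
  rw [mul_zero, add_zero, sub_zero] at hlim
  refine hlim.congr' ?_
  filter_upwards [eventually_gt_atTop 0] with t ht
  simpa using (cpow_sub_one_mul_natCast_floor_add_one_eq ht (m + 1)).symm

theorem sum_Ioc_floor_cpow_eq (hm : m ≠ 0) (hx : 0 < x) {b : ℝ} (hb : x ≤ b) :
    ∑ k ∈ Ioc ⌊x⌋₊ ⌊b⌋₊, (k : ℂ) ^ m = (b : ℂ) ^ m * (⌊b⌋₊ + 1) - (x : ℂ) ^ m * (⌊x⌋₊ + 1) -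
      m * ∫ t : ℝ in Set.Ioc x b, (t : ℂ) ^ (m - 1) * (⌊t⌋₊ + 1) := by
  have hderiv (t : ℝ) (ht : t ∈ Set.Icc x b) :
      HasDerivAt (fun y : ℝ => (y : ℂ) ^ m) (m * (t : ℂ) ^ (m - 1)) t :=
    hasDerivAt_ofReal_cpow_const (hx.trans_le ht.1).ne' hm
  have hcont : ContinuousOn (fun t : ℝ => m * (t : ℂ) ^ (m - 1)) (Set.Icc x b) := fun t ht =>
    (continuousAt_const.mul (Complex.continuousAt_ofReal_cpow_const _ _
      (.inr (hx.trans_le ht.1).ne'))).continuousWithinAt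
  have habel := sum_mul_eq_sub_sub_integral_mul (fun _ => (1 : ℂ)) hx.le hb
    (fun t ht => (hderiv t ht).differentiableAt)
    (hcont.integrableOn_Icc.congr_fun (fun t ht => (hderiv t ht).deriv.symm) measurableSet_Icc)
  simp only [sum_const, Nat.card_Icc, nsmul_eq_mul, mul_one, Nat.sub_zero,
    Nat.cast_add, Nat.cast_one, Complex.ofReal_natCast] at habel
  rw [habel, ← integral_const_mul]
  congr 1
  exact setIntegral_congr_fun measurableSet_Ioc fun t ht => by
    rw [(hderiv t (Set.Ioc_subset_Icc_self ht)).deriv, mul_assoc]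

theorem tendsto_sum_Icc_cpow_riemannZeta (hm : m.re < -1) :
    Tendsto (fun N : ℕ => ∑ k ∈ Icc 1 N, (k : ℂ) ^ m) atTop (𝓝 (riemannZeta (-m))) := by
  have hm' : 1 < (-m).re := by rw [Complex.neg_re]; linarith
  have hsum : HasSum (fun k : ℕ => ((k + 1 : ℕ) : ℂ) ^ m) (riemannZeta (-m)) := by
    rw [zeta_eq_tsum_one_div_nat_add_one_cpow hm']
    have hsummable := (summable_nat_add_iff 1).mpr (Complex.summable_one_div_nat_cpow.mpr hm')
    simpa [Complex.cpow_neg] using hsummable.hasSum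
  refine hsum.tendsto_sum_nat.congr fun N => ?_
  rw [range_eq_Ico, sum_Ico_add' (fun k : ℕ => (k : ℂ) ^ m) 0 N 1]
  rfl

theorem sum_Icc_cpow_sub_riemannZeta_eq_integral (hm : m.re < -1) (hx : 0 < x) :
    ∑ k ∈ Icc 1 ⌊x⌋₊, (k : ℂ) ^ m - riemannZeta (-m) = (x : ℂ) ^ m * (⌊x⌋₊ + 1) +
      m * ∫ t : ℝ in Set.Ioi x, (t : ℂ) ^ (m - 1) * (⌊t⌋₊ + 1) := by
  have hm₀ : m ≠ 0 := fun h => by norm_num [h] at hm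
  have hintegral := intervalIntegral_tendsto_integral_Ioi x
    (integrableOn_cpow_sub_one_mul_natCast_floor_add_one hm hx) tendsto_id
  have hlim := ((tendsto_cpow_mul_natCast_floor_add_one hm).sub_const
    ((x : ℂ) ^ m * (⌊x⌋₊ + 1))).sub (hintegral.const_mul m)
  have hzeta := ((tendsto_sum_Icc_cpow_riemannZeta hm).comp
    (tendsto_nat_floor_atTop (α := ℝ))).sub_const (∑ k ∈ Icc 1 ⌊x⌋₊, (k : ℂ) ^ m)
  have heq := tendsto_nhds_unique hlim (hzeta.congr' ?_)
  · linear_combination heq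
  filter_upwards [eventually_ge_atTop x] with b hb
  rw [id, intervalIntegral.integral_of_le hb, ← sum_Ioc_floor_cpow_eq hm₀ hx hb,
    Function.comp_apply, sub_eq_iff_eq_add']
  exact (sum_Ioc_consecutive (fun k : ℕ => (k : ℂ) ^ m) (Nat.zero_le _)
    (Nat.floor_le_floor hb)).symm

/-- What Faulhaber's formula for `(m + 1) * ∑ k ≤ x, k ^ m` leaves after its first `a` correction
terms. The entire function `riemannZeta₁` stands for `(s - 1) ζ(s)`, so that the remainder is
entire in `m`. -/
noncomputable def faulhaberRemainder (a : ℕ) (m : ℂ) (x : ℝ) : ℂ :=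
  (m + 1) * ∑ k ∈ Icc 1 ⌊x⌋₊, (k : ℂ) ^ m + riemannZeta₁ (-m) - (x : ℂ) ^ (m + 1) -
    ∑ k ∈ Icc 1 a, faulhaberCoeff m (Int.fract x) k * (x : ℂ) ^ (m - k + 1)

theorem riemannZeta₁_neg (hm : m ≠ -1) : riemannZeta₁ (-m) = -((m + 1) * riemannZeta (-m)) := by
  have hm₁ : -m ≠ 1 := fun h => hm (by linear_combination -h)
  rw [riemannZeta_eq_inv_sub_mul hm₁, ← neg_mul, neg_add',
    mul_inv_cancel_left₀ (sub_ne_zero.mpr hm₁)]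

theorem faulhaberRemainder_succ (a : ℕ) (m : ℂ) (x : ℝ) :
    faulhaberRemainder (a + 1) m x =
      faulhaberRemainder a m x - faulhaberCoeff m (Int.fract x) (a + 1) * (x : ℂ) ^ (m - a) := by
  rw [faulhaberRemainder, faulhaberRemainder, sum_Icc_succ_top (by lia)]
  push_cast
  ring_nf

theorem faulhaberRemainder_one_of_re_lt (hm : m.re < -1) (hx : 0 < x) :
    faulhaberRemainder 1 m x =
      -((ascPochhammer ℂ 2).eval (-(m + 1)) * bernoulliTail 1 (m - 1) x) := by
  have hm₀ : m ≠ 0 := fun h => by norm_num [h] at hm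
  have hm₁ : m ≠ -1 := fun h => by norm_num [h] at hm
  have hm₁' : m + 1 ≠ 0 := fun h => hm₁ (eq_neg_of_add_eq_zero_left h)
  have hsum := sum_Icc_cpow_sub_riemannZeta_eq_integral hm hx
  rw [integral_cpow_sub_one_mul_natCast_floor_add_one hm hx, natCast_floor_add_one_eq hx.le] at hsum
  have hpow : (x : ℂ) ^ (m + 1) = (x : ℂ) ^ m * x := by
    rw [Complex.cpow_add _ _ (Complex.ofReal_ne_zero.mpr hx.ne'), Complex.cpow_one]
  have hasc : (ascPochhammer ℂ 2).eval (-(m + 1)) = m * (m + 1) := by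
    rw [ascPochhammer_succ_eval, ascPochhammer_one, Polynomial.eval_X]
    push_cast
    ring
  have hcoeff : faulhaberCoeff m (Int.fract x) 1 = -(m + 1) * bernoulliFun 1 (Int.fract x) := by
    rw [faulhaberCoeff_eq_ascPochhammer_mul, ascPochhammer_one, Polynomial.eval_X,
      Nat.factorial_one, Nat.cast_one, div_one]
  rw [faulhaberRemainder, riemannZeta₁_neg hm₁, hasc, Icc_self, sum_singleton, hcoeff,
    Nat.cast_one, sub_add_cancel, hpow]
  rw [hpow] at hsum
  field_simp at hsum
  linear_combination hsum / 2

theorem faulhaberRemainder_succ_eq_of_eq {a : ℕ} (ha : a ≠ 0) (hm : m.re < a - 1) (hx : 0 < x)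
    (h : faulhaberRemainder a m x = -((ascPochhammer ℂ (a + 1)).eval (-(m + 1)) / a.factorial *
      bernoulliTail a (m - a) x)) :
    faulhaberRemainder (a + 1) m x = -((ascPochhammer ℂ (a + 2)).eval (-(m + 1)) /
      (a + 1).factorial * bernoulliTail (a + 1) (m - (a + 1 : ℕ)) x) := by
  have hs : (m - a).re < -1 := by rw [Complex.sub_re, Complex.natCast_re]; linarith
  have hparts := add_one_mul_bernoulliTail ha hs hx
  have ha₁ : (a + 1 : ℂ) ≠ 0 := Nat.cast_add_one_ne_zero a
  have hfact : (a.factorial : ℂ) ≠ 0 := Nat.cast_ne_zero.mpr a.factorial_ne_zero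
  rw [faulhaberRemainder_succ, h, faulhaberCoeff_eq_ascPochhammer_mul,
    ascPochhammer_succ_eval (a + 1), Nat.factorial_succ, Nat.cast_add_one, ← sub_sub]
  push_cast
  field_simp
  linear_combination -(ascPochhammer ℂ (a + 1)).eval (-(m + 1)) * hparts

theorem faulhaberRemainder_eq_of_re_lt_neg_one {a : ℕ} (ha : 1 ≤ a) (hm : m.re < -1)
    (hx : 0 < x) :
    faulhaberRemainder a m x = -((ascPochhammer ℂ (a + 1)).eval (-(m + 1)) / a.factorial *
      bernoulliTail a (m - a) x) := by
  induction a, ha using Nat.le_induction with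
  | base => simpa using faulhaberRemainder_one_of_re_lt hm hx
  | succ a ha ih =>
    have hma : m.re < a - 1 := by linarith [a.cast_nonneg (α := ℝ)]
    exact faulhaberRemainder_succ_eq_of_eq (Nat.one_le_iff_ne_zero.mp ha) hma hx ih

theorem differentiable_ascPochhammer_eval_neg_add_one (n : ℕ) :
    Differentiable ℂ fun m : ℂ => (ascPochhammer ℂ n).eval (-(m + 1)) :=
  (ascPochhammer ℂ n).differentiable.comp (differentiable_id.add_const 1).neg

theorem differentiable_faulhaberRemainder (a : ℕ) (hx : 0 < x) :
    Differentiable ℂ fun m => faulhaberRemainder a m x := by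
  have hx₀ : (x : ℂ) ≠ 0 := Complex.ofReal_ne_zero.mpr hx.ne'
  have hpowers : Differentiable ℂ fun m : ℂ => ∑ k ∈ Icc 1 ⌊x⌋₊, (k : ℂ) ^ m :=
    Differentiable.fun_sum fun k hk => differentiable_id.const_cpow
      (.inl (Nat.cast_ne_zero.mpr (Nat.one_le_iff_ne_zero.mp (mem_Icc.mp hk).1)))
  have hzeta : Differentiable ℂ fun m : ℂ => riemannZeta₁ (-m) :=
    differentiable_riemannZeta₁.comp differentiable_neg
  have hcorrection : Differentiable ℂ fun m : ℂ =>
      ∑ k ∈ Icc 1 a, faulhaberCoeff m (Int.fract x) k * (x : ℂ) ^ (m - k + 1) := by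
    simp only [faulhaberCoeff_eq_ascPochhammer_mul]
    exact Differentiable.fun_sum fun k _ =>
      ((differentiable_ascPochhammer_eval_neg_add_one k).mul_const _).mul
        (((differentiable_id.sub_const _).add_const 1).const_cpow (.inl hx₀))
  exact ((((differentiable_id.add_const 1).mul hpowers).add hzeta).sub
    ((differentiable_id.add_const 1).const_cpow (.inl hx₀))).sub hcorrection

theorem faulhaberRemainder_eq_bernoulliTail {a : ℕ} (ha : 1 ≤ a) (hm : m.re < a - 1)
    (hx : 0 < x) :
    faulhaberRemainder a m x = -((ascPochhammer ℂ (a + 1)).eval (-(m + 1)) / a.factorial *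
      bernoulliTail a (m - a) x) := by
  set U : Set ℂ := {s | s.re < a - 1}
  have hU : IsOpen U := isOpen_lt Complex.continuous_re continuous_const
  have htail : DifferentiableOn ℂ (fun s => -((ascPochhammer ℂ (a + 1)).eval (-(s + 1)) /
      a.factorial * bernoulliTail a (s - a) x)) U := fun s hs => by
    have hs' : (s - a).re < -1 := by
      rw [Complex.sub_re, Complex.natCast_re]; linarith [show s.re < a - 1 from hs]
    exact ((((differentiable_ascPochhammer_eval_neg_add_one (a + 1)) s).div_const _).mul
      ((differentiableAt_bernoulliTail a hs' hx).comp s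
        (differentiableAt_id.sub_const (a : ℂ)))).neg.differentiableWithinAt
  have hmem : (-2 : ℂ) ∈ U := by
    have ha₁ : (1 : ℝ) ≤ a := Nat.one_le_cast.mpr ha
    simp only [U, Set.mem_ofPred_eq, Complex.neg_re, Complex.re_ofNat]
    linarith
  have heventually : ∀ᶠ s : ℂ in 𝓝 (-2), s.re < -1 :=
    Complex.continuous_re.continuousAt.eventually_lt continuousAt_const (by norm_num)
  exact ((differentiable_faulhaberRemainder a hx).differentiableOn.analyticOnNhd
    hU).eqOn_of_preconnected_of_eventuallyEq (htail.analyticOnNhd hU)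
      (convex_halfSpace_re_lt _).isPreconnected hmem
      (heventually.mono fun s hs => faulhaberRemainder_eq_of_re_lt_neg_one ha hs hx) hm

end EulerMaclaurin

section Descent

variable {m : ℂ} {x : ℝ} {a : ℕ}

theorem forall_of_eventually_of_succ {P : ℕ → Prop} (hlarge : ∀ᶠ n in atTop, P n)
    (hsucc : ∀ n, P (n + 1) → P n) (n : ℕ) : P n := by
  obtain ⟨N, hP, hN⟩ := (hlarge.and (eventually_ge_atTop n)).exists
  induction hN using Nat.decreasingInduction with
  | self => exact hP
  | of_succ k _ ih => exact hsucc k ih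

theorem eventually_two_le_and_re_lt_natCast_sub_one (m : ℂ) :
    ∀ᶠ a : ℕ in atTop, 2 ≤ a ∧ m.re < a - 1 := by
  filter_upwards [eventually_ge_atTop 2,
    (tendsto_natCast_atTop_atTop (R := ℝ)).eventually_gt_atTop (m.re + 1)] with a ha hm
  exact ⟨ha, by linarith⟩

theorem inverseFactorialTerm_faulhaberCoeff_add (m : ℂ) (θ : ℝ) (a : ℕ) (z : ℂ) (k : ℕ) :
    inverseFactorialTerm (fun l => faulhaberCoeff m θ (l + a)) z k =
      (ascPochhammer ℂ a).eval (-(m + 1)) *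
        inverseFactorialTerm (bernoulliCoeff (-(m + 1) + a) a θ) z k := by
  simp only [faulhaberCoeff_add, inverseFactorialTerm_const_mul]

theorem re_neg_add_one_add_natCast_pos (hm : m.re < a - 1) : 0 < (-(m + 1) + a).re := by
  simp only [Complex.add_re, Complex.neg_re, Complex.one_re, Complex.natCast_re]
  linarith

theorem summable_norm_inverseFactorialTerm_faulhaberCoeff (m : ℂ) (hx : 0 < x) (a : ℕ) :
    Summable fun k =>
      ‖inverseFactorialTerm (fun l => faulhaberCoeff m (Int.fract x) (l + a)) x (k + 1)‖ := by
  induction a using forall_of_eventually_of_succ with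
  | hlarge =>
    filter_upwards [eventually_two_le_and_re_lt_natCast_sub_one m] with a ⟨ha, hm⟩
    simp only [inverseFactorialTerm_faulhaberCoeff_add, norm_mul]
    exact (summable_norm_inverseFactorialTerm_bernoulliCoeff ha
      (re_neg_add_one_add_natCast_pos hm) hx).mul_left _
  | hsucc a ih =>
    refine summable_norm_inverseFactorialTerm_of_shift (by simpa using hx) ?_
    simpa only [add_assoc, add_comm 1 a] using ih

theorem faulhaberRemainder_eq_tsum_of_re_lt (ha : 2 ≤ a) (hm : m.re < a - 1) (hx : 0 < x) :
    faulhaberRemainder a m x = (x : ℂ) ^ (m - a + 1) *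
      ∑' k, inverseFactorialTerm (fun l => faulhaberCoeff m (Int.fract x) (l + a)) x (k + 1) := by
  have hpow : (x : ℂ) ^ (m - a + 1) * (x : ℂ) ^ (-(m + 1) + a) = 1 := by
    rw [← Complex.cpow_add _ _ (Complex.ofReal_ne_zero.mpr hx.ne'),
      show m - a + 1 + (-(m + 1) + a) = 0 by ring, Complex.cpow_zero]
  simp only [inverseFactorialTerm_faulhaberCoeff_add]
  rw [tsum_mul_left, tsum_inverseFactorialTerm_bernoulliCoeff ha
      (re_neg_add_one_add_natCast_pos hm) hx,
    faulhaberRemainder_eq_bernoulliTail (one_le_two.trans ha) hm hx, ascPochhammer_succ_eval,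
    show -(-(m + 1) + a + 1) = m - a by ring]
  linear_combination (ascPochhammer ℂ a).eval (-(m + 1)) * (-(m + 1) + a) *
    (bernoulliTail a (m - a) x / a.factorial) * hpow

theorem faulhaberRemainder_eq_tsum (m : ℂ) (hx : 0 < x) (a : ℕ) :
    faulhaberRemainder a m x = (x : ℂ) ^ (m - a + 1) *
      ∑' k, inverseFactorialTerm (fun l => faulhaberCoeff m (Int.fract x) (l + a)) x (k + 1) := by
  induction a using forall_of_eventually_of_succ with
  | hlarge =>
    filter_upwards [eventually_two_le_and_re_lt_natCast_sub_one m] with a ⟨ha, hm⟩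
    exact faulhaberRemainder_eq_tsum_of_re_lt ha hm hx
  | hsucc a ih =>
    have hpow : (x : ℂ) ^ (m - a + 1) = (x : ℂ) ^ (m - a) * x := by
      rw [Complex.cpow_add _ _ (Complex.ofReal_ne_zero.mpr hx.ne'), Complex.cpow_one]
    have hshift := mul_tsum_inverseFactorialTerm (x := (x : ℂ))
      (c := fun l => faulhaberCoeff m (Int.fract x) (l + a)) (by simpa using hx) (by
        simpa only [add_assoc, add_comm 1 a] using
          summable_norm_inverseFactorialTerm_faulhaberCoeff m hx (a + 1))
    simp only [add_assoc, add_comm 1 a] at hshift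
    rw [faulhaberRemainder_succ, Nat.cast_add_one, sub_add_eq_sub_sub, sub_add_cancel] at ih
    rw [hpow, mul_assoc, hshift]
    linear_combination ih

end Descent

end

open Finset in
/-- The extended generalized Faulhaber formula with shift parameter `a`
(formula (29) of Theorem 5.1). -/
theorem extended_generalized_faulhaber_shift (m : ℂ) (hm : m ≠ -1)
    (x : ℝ) (hx : 0 < x) (a : ℕ) :
    Summable (fun k : ℕ =>
      ‖(-1 : ℂ) ^ (k + 1 + a) *
          (∑ l ∈ Icc 1 (k + 1),
            cchoose (m + 1) (l + a) * (S1 (k + 1) l : ℂ) * (bernPoly (l + a) (Int.fract x) : ℂ)) /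
        risingProd (x : ℂ) (k + 1)‖) ∧
    (∑ k ∈ Icc 1 ⌊x⌋₊, (k : ℂ) ^ m) =
      (x : ℂ) ^ (m + 1) / (m + 1) + riemannZeta (-m) +
        1 / (m + 1) *
          ∑ k ∈ Icc 1 a,
            (-1 : ℂ) ^ k * cchoose (m + 1) k * (bernPoly k (Int.fract x) : ℂ) *
              (x : ℂ) ^ (m - k + 1) +
        (x : ℂ) ^ (m - a + 1) / (m + 1) *
          ∑' k : ℕ,
            (-1 : ℂ) ^ (k + 1 + a) *
                (∑ l ∈ Icc 1 (k + 1),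
                  cchoose (m + 1) (l + a) * (S1 (k + 1) l : ℂ) *
                    (bernPoly (l + a) (Int.fract x) : ℂ)) /
              risingProd (x : ℂ) (k + 1) := by
  simp only [neg_one_pow_mul_sum_Icc_S1_eq_stirlingTransform]
  refine ⟨summable_norm_inverseFactorialTerm_faulhaberCoeff m hx a, ?_⟩
  have hm₁ : m + 1 ≠ 0 := fun h => hm (eq_neg_of_add_eq_zero_left h)
  have hremainder := faulhaberRemainder_eq_tsum m hx a
  simp only [faulhaberRemainder, riemannZeta₁_neg hm, inverseFactorialTerm, faulhaberCoeff]
    at hremainder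
  simp only [faulhaberCoeff]
  field_simp
  linear_combination hremainder
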